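/- Let (X,d,μ) be an η-Ahlfors regular quasi-metric measure space with η > 0 and triangular constant κ ≥ 1, let 0 < γ < 2η and set σ = (2η−γ)/(2η). Suppose p₁, p₂, p₃ satisfy σ < 1/p₁ < 1, σ < 1/p₂ < 1 and 1/p₃ = 1/p₁ + 1/p₂ − 2σ. Then there exists C > 0 such that ‖(I_{η−γ/2}f)·(I_{η−γ/2}g)‖_{L^{p₃}(μ)} ≤ C ‖f‖_{L^{p₁}(μ)} ‖g‖_{L^{p₂}(μ)} for every f ∈ L^{p₁}(X,μ) and g ∈ L^{p₂}(X,μ) nonnegative. -/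

import Mathlib

open MeasureTheory ENNReal

/-- The third order hypermetric induced by `d`:
`ρ(x,y,z) = inf_{u ∈ X} max {d(x,u), d(y,u), d(z,u)}`. -/
noncomputable def hyperRho {X : Type*} (d : X → X → ℝ) (x y z : X) : ℝ :=
  ⨅ u : X, max (d x u) (max (d y u) (d z u))

/-- `d` is a quasi-metric on `X` with triangular constant `κ`. -/
def IsQuasiMetric {X : Type*} (d : X → X → ℝ) (κ : ℝ) : Prop :=
  (∀ x y, 0 ≤ d x y) ∧ (∀ x y, (d x y = 0 ↔ x = y)) ∧ (∀ x y, d x y = d y x) ∧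
    (∀ x y z, d x z ≤ κ * (d x y + d y z))

/-- `(X,d,μ)` is `η`-Ahlfors regular with constants `a ≤ A`. -/
def IsAhlfors {X : Type*} [MeasurableSpace X] (d : X → X → ℝ) (μ : Measure X)
    (η a A : ℝ) : Prop :=
  ∀ x : X, ∀ r : ℝ, 0 < r →
    ENNReal.ofReal (a * r ^ η) ≤ μ {y | d x y < r} ∧
      μ {y | d x y < r} ≤ ENNReal.ofReal (A * r ^ η)

/-- The bilinear fractional integral operator
`T^γ(f,g)(x) = ∬ f(y) g(z) ρ(x,y,z)^{-γ} dμ(y) dμ(z)`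
(with the convention `0 ^ (-γ) = ∞` for `γ > 0`, as in `ENNReal.rpow`). -/
noncomputable def Tgamma {X : Type*} [MeasurableSpace X] (d : X → X → ℝ)
    (μ : Measure X) (γ : ℝ) (f g : X → ℝ≥0∞) (x : X) : ℝ≥0∞ :=
  ∫⁻ y, ∫⁻ z, f y * g z * (ENNReal.ofReal (hyperRho d x y z)) ^ (-γ) ∂μ ∂μ

/-- The linear fractional integral operator of order `β` in the `η`-dimensional
space `(X,d,μ)`: `I_β h(x) = ∫ h(y) d(x,y)^{β-η} dμ(y)`. -/
noncomputable def fracInt {X : Type*} [MeasurableSpace X] (d : X → X → ℝ)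
    (μ : Measure X) (β η : ℝ) (h : X → ℝ≥0∞) (x : X) : ℝ≥0∞ :=
  ∫⁻ y, h y * (ENNReal.ofReal (d x y)) ^ (β - η) ∂μ

/-- The `L^p(μ)` norm of a nonnegative function, `p` a real exponent. -/
noncomputable def lpNorm {X : Type*} [MeasurableSpace X] (μ : Measure X) (p : ℝ)
    (h : X → ℝ≥0∞) : ℝ≥0∞ :=
  (∫⁻ x, (h x) ^ p ∂μ) ^ (1 / p)

/-!
Since `1/p₃ = (1/p₁ - σ) + (1/p₂ - σ)`, Hölder's inequality reduces the claim to the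
Hardy–Littlewood–Sobolev bound for each of the two factors.

That bound holds for every kernel `W ^ s`, `0 < s < 1`, whose base `W` has uniformly bounded weak
`L¹` norm in each variable; upper growth of balls says that `W = d ^ (-η)` is such a base. For
`u ≥ 0` with `∫ u ≤ 1` and `1 < α + s`, put
`J x = ∫ min (u y) (W x y) ^ (2 - α - s) * (u y ^ α * W x y ^ s) dy`. Splitting the integral
`∫ u y ^ α * W x y ^ s dy` over `W ≤ t`, `u ≤ t ≤ W` and `t < min u W` bounds it by a multiple of
`t ^ (α + s - 1) + t ^ (α + s - 2) * J x` for every level `t`, hence by a multiple of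
`J x ^ (α + s - 1)`. By Tonelli and `∫ min (u y) (W x y) ^ a * W x y ^ s dx ≲ u y ^ (a + s - 1)`
the function `J` has integral at most a constant. With `u = g ^ p` and `α = 1 / p` this is the
bound for `‖g‖_p ≤ 1`, and scaling gives the general case.
-/

section WeakL1

variable {X : Type*} [MeasurableSpace X] {μ : Measure X} {w : X → ℝ≥0∞} {s : ℝ}

/-- The weak `L¹` quasi-norm `sup_τ τ · μ{w ≥ τ}`, the supremum being over finite levels `τ`. -/
noncomputable def weakL1Norm (μ : Measure X) (w : X → ℝ≥0∞) : ℝ≥0∞ :=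
  ⨆ τ : NNReal, τ * μ {x | τ ≤ w x}

lemma mul_meas_ge_le_weakL1Norm (μ : Measure X) (w : X → ℝ≥0∞) {τ : ℝ≥0∞} (hτ : τ ≠ ⊤) :
    τ * μ {x | τ ≤ w x} ≤ weakL1Norm μ w := by
  lift τ to NNReal using hτ
  exact le_iSup (fun τ : NNReal => τ * μ {x | τ ≤ w x}) τ

lemma ae_ne_top_of_weakL1Norm_ne_top (hw : weakL1Norm μ w ≠ ⊤) : ∀ᵐ x ∂μ, w x ≠ ⊤ := by
  simp_rw [ae_iff, not_not]
  by_contra hpos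
  obtain ⟨n, hn⟩ := ENNReal.exists_nat_mul_gt hpos hw
  refine hn.not_ge (le_trans ?_ (mul_meas_ge_le_weakL1Norm μ w (ENNReal.natCast_ne_top n)))
  exact mul_le_mul_right (measure_mono fun x hx => le_top.trans_eq (Eq.symm hx)) _

lemma setLIntegral_rpow_shell_le (hwm : Measurable w) (hs : 0 ≤ s) {τ : ℝ≥0∞} (hτ₀ : τ ≠ 0)
    (hτ : τ ≠ ⊤) :
    ∫⁻ x in {x | τ ≤ w x ∧ w x ≤ 2 * τ}, w x ^ s ∂μ ≤ 2 ^ s * weakL1Norm μ w * τ ^ (s - 1) := by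
  have hmeas : MeasurableSet {x | τ ≤ w x ∧ w x ≤ 2 * τ} :=
    (measurableSet_le measurable_const hwm).inter (measurableSet_le hwm measurable_const)
  calc ∫⁻ x in {x | τ ≤ w x ∧ w x ≤ 2 * τ}, w x ^ s ∂μ
      ≤ ∫⁻ _ in {x | τ ≤ w x ∧ w x ≤ 2 * τ}, (2 * τ) ^ s ∂μ :=
        setLIntegral_mono' hmeas fun x hx => ENNReal.rpow_le_rpow hx.2 hs
    _ ≤ (2 * τ) ^ s * μ {x | τ ≤ w x} := by
        rw [setLIntegral_const]
        gcongr
        exact fun hx => hx.1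
    _ = 2 ^ s * (τ * μ {x | τ ≤ w x}) * τ ^ (s - 1) := by
        have hτs : τ ^ s = τ * τ ^ (s - 1) := by
          rw [ENNReal.rpow_sub _ _ hτ₀ hτ, ENNReal.rpow_one, ENNReal.mul_div_cancel hτ₀ hτ]
        rw [ENNReal.mul_rpow_of_nonneg _ _ hs, hτs]
        ring
    _ ≤ 2 ^ s * weakL1Norm μ w * τ ^ (s - 1) := by
        gcongr
        exact mul_meas_ge_le_weakL1Norm μ w hτ

lemma setLIntegral_rpow_le_of_geometric_cover (hwm : Measurable w) (hw : weakL1Norm μ w ≠ ⊤)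
    (hs : 0 < s) {c τ : ℝ≥0∞} (hc₀ : c ≠ 0) (hc : c ≠ ⊤) (hτ₀ : τ ≠ 0) (hτ : τ ≠ ⊤) {E : Set X}
    (hE : MeasurableSet E)
    (hcover : ∀ x ∈ E, w x ≠ 0 → w x ≠ ⊤ → ∃ k : ℕ, τ * c ^ k ≤ w x ∧ w x ≤ 2 * (τ * c ^ k)) :
    ∫⁻ x in E, w x ^ s ∂μ ≤ 2 ^ s * (1 - c ^ (s - 1))⁻¹ * weakL1Norm μ w * τ ^ (s - 1) := by
  let shell : ℕ → Set X := fun k => {x | τ * c ^ k ≤ w x ∧ w x ≤ 2 * (τ * c ^ k)}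
  have hshell : ∀ k, MeasurableSet (shell k) := fun k =>
    (measurableSet_le measurable_const hwm).inter (measurableSet_le hwm measurable_const)
  have hpow : ∀ k : ℕ, (τ * c ^ k) ^ (s - 1) = τ ^ (s - 1) * (c ^ (s - 1)) ^ k := fun k => by
    rw [ENNReal.mul_rpow_of_ne_top hτ (by finiteness), ← ENNReal.rpow_natCast_mul,
      ← ENNReal.rpow_mul_natCast, mul_comm (k : ℝ)]
  calc ∫⁻ x in E, w x ^ s ∂μ
      ≤ ∫⁻ x in ⋃ k, shell k, w x ^ s ∂μ := by
        rw [← lintegral_indicator hE, ← lintegral_indicator (.iUnion hshell)]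
        refine lintegral_mono_ae ?_
        filter_upwards [ae_ne_top_of_weakL1Norm_ne_top hw] with x hx
        by_cases hxE : x ∈ E
        · by_cases hx₀ : w x = 0
          · simp [hxE, hx₀, hs]
          · rw [Set.indicator_of_mem hxE,
              Set.indicator_of_mem (Set.mem_iUnion.2 (hcover x hxE hx₀ hx))]
        · simp [hxE]
    _ ≤ ∑' k, ∫⁻ x in shell k, w x ^ s ∂μ := lintegral_iUnion_le _ _
    _ ≤ ∑' k : ℕ, 2 ^ s * weakL1Norm μ w * (τ ^ (s - 1) * (c ^ (s - 1)) ^ k) := by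
        refine ENNReal.tsum_le_tsum fun k => ?_
        rw [← hpow]
        exact setLIntegral_rpow_shell_le hwm hs.le (mul_ne_zero hτ₀ (pow_ne_zero k hc₀))
          (by finiteness)
    _ = 2 ^ s * (1 - c ^ (s - 1))⁻¹ * weakL1Norm μ w * τ ^ (s - 1) := by
        simp_rw [ENNReal.tsum_mul_left, ENNReal.tsum_geometric]
        ring

lemma exists_two_pow_le_and_le_two_mul {r : ℝ≥0∞} (h₁ : 1 ≤ r) (hr : r ≠ ⊤) :
    ∃ k : ℕ, 2 ^ k ≤ r ∧ r ≤ 2 * 2 ^ k := by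
  lift r to NNReal using hr
  obtain ⟨k, hk, hk'⟩ := exists_nat_pow_near (mod_cast h₁) (one_lt_two (α := NNReal))
  rw [pow_succ'] at hk'
  exact ⟨k, mod_cast hk, mod_cast hk'.le⟩

/-- The constant of the power estimates for weak `L¹` functions: `2 ^ s` times the sum of the
geometric series of ratio `2 ^ (-|s - 1|)`, infinite at the critical power `s = 1`. -/
noncomputable def dyadicConst (s : ℝ) : ℝ≥0∞ :=
  2 ^ s * (1 - 2 ^ (-|s - 1|))⁻¹

lemma dyadicConst_ne_top (hs : s ≠ 1) : dyadicConst s ≠ ⊤ := by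
  have hratio : (2 : ℝ≥0∞) ^ (-|s - 1|) < 1 :=
    ENNReal.rpow_lt_one_of_one_lt_of_neg one_lt_two (neg_lt_zero.2 (abs_pos.2 (sub_ne_zero.2 hs)))
  exact ENNReal.mul_ne_top (by simp) (ENNReal.inv_ne_top.2 (tsub_pos_of_lt hratio).ne')

lemma setLIntegral_rpow_superlevel_le (hwm : Measurable w) (hw : weakL1Norm μ w ≠ ⊤)
    (hs₀ : 0 < s) (hs₁ : s < 1) {t : ℝ≥0∞} (ht₀ : t ≠ 0) (ht : t ≠ ⊤) :
    ∫⁻ x in {x | t ≤ w x}, w x ^ s ∂μ ≤ dyadicConst s * weakL1Norm μ w * t ^ (s - 1) := by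
  have hconst : dyadicConst s = 2 ^ s * (1 - 2 ^ (s - 1))⁻¹ := by
    rw [dyadicConst, abs_of_neg (by linarith), neg_neg]
  rw [hconst]
  refine setLIntegral_rpow_le_of_geometric_cover hwm hw hs₀ two_ne_zero (by finiteness) ht₀ ht
    (measurableSet_le measurable_const hwm) fun x hx _ hx_top => ?_
  obtain ⟨k, hk, hk'⟩ := exists_two_pow_le_and_le_two_mul (r := w x / t)
    ((ENNReal.le_div_iff_mul_le (.inl ht₀) (.inl ht)).2 (by simpa using hx)) (by finiteness)
  refine ⟨k, ?_, ?_⟩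
  · rwa [ENNReal.le_div_iff_mul_le (.inl ht₀) (.inl ht), mul_comm] at hk
  · rwa [ENNReal.div_le_iff ht₀ ht, mul_assoc, mul_comm _ t] at hk'

lemma setLIntegral_rpow_sublevel_le (hwm : Measurable w) (hw : weakL1Norm μ w ≠ ⊤)
    (hs : 1 < s) {t : ℝ≥0∞} (ht₀ : t ≠ 0) (ht : t ≠ ⊤) :
    ∫⁻ x in {x | w x ≤ t}, w x ^ s ∂μ ≤ dyadicConst s * weakL1Norm μ w * t ^ (s - 1) := by
  have hcover : ∀ x ∈ {x | w x ≤ t}, w x ≠ 0 → w x ≠ ⊤ →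
      ∃ k : ℕ, t / 2 * 2⁻¹ ^ k ≤ w x ∧ w x ≤ 2 * (t / 2 * 2⁻¹ ^ k) := fun x hx hx₀ hx_top => by
    obtain ⟨k, hk, hk'⟩ := exists_two_pow_le_and_le_two_mul (r := t / w x)
      ((ENNReal.le_div_iff_mul_le (.inl hx₀) (.inl hx_top)).2 (by simpa using hx))
      (by finiteness)
    refine ⟨k, ?_, ?_⟩
    · rw [← ENNReal.inv_pow, ← div_eq_mul_inv, ENNReal.div_le_iff (by simp) (by finiteness)]
      rw [ENNReal.div_le_iff hx₀ hx_top] at hk'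
      refine ENNReal.div_le_of_le_mul (hk'.trans_eq (by ring))
    · rw [← ENNReal.inv_pow, ← mul_assoc, ENNReal.mul_div_cancel two_ne_zero (by finiteness),
        ← div_eq_mul_inv, ENNReal.le_div_iff_mul_le (by simp) (by simp)]
      rwa [ENNReal.le_div_iff_mul_le (.inl hx₀) (.inl hx_top), mul_comm] at hk
  calc ∫⁻ x in {x | w x ≤ t}, w x ^ s ∂μ
      ≤ 2 ^ s * (1 - 2⁻¹ ^ (s - 1))⁻¹ * weakL1Norm μ w * (t / 2) ^ (s - 1) :=
        setLIntegral_rpow_le_of_geometric_cover hwm hw (by linarith) (by simp) (by simp) (by simpa)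
          (by finiteness) (measurableSet_le hwm measurable_const) hcover
    _ ≤ dyadicConst s * weakL1Norm μ w * t ^ (s - 1) := by
        rw [dyadicConst, abs_of_pos (by linarith), ENNReal.rpow_neg, ENNReal.inv_rpow]
        gcongr
        exact ENNReal.half_le_self

lemma lintegral_min_rpow_mul_rpow_le {a : ℝ} (hwm : Measurable w) (hw : weakL1Norm μ w ≠ ⊤)
    (hs₀ : 0 < s) (hs₁ : s < 1) (has : 1 < a + s) {t : ℝ≥0∞} (ht₀ : t ≠ 0) (ht : t ≠ ⊤) :
    ∫⁻ x, min t (w x) ^ a * w x ^ s ∂μ ≤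
      (dyadicConst (a + s) + dyadicConst s) * weakL1Norm μ w * t ^ (a + s - 1) := by
  have ha : 0 ≤ a := by linarith
  have hsmall : ∫⁻ x in {x | w x ≤ t}, min t (w x) ^ a * w x ^ s ∂μ ≤
      dyadicConst (a + s) * weakL1Norm μ w * t ^ (a + s - 1) := by
    refine le_trans (setLIntegral_mono' (measurableSet_le hwm measurable_const) fun x _ => ?_)
      (setLIntegral_rpow_sublevel_le hwm hw has ht₀ ht)
    rw [ENNReal.rpow_add_of_nonneg _ _ ha hs₀.le]
    gcongr
    exact min_le_right _ _
  have hlarge : ∫⁻ x in {x | t ≤ w x}, min t (w x) ^ a * w x ^ s ∂μ ≤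
      dyadicConst s * weakL1Norm μ w * t ^ (a + s - 1) :=
    calc ∫⁻ x in {x | t ≤ w x}, min t (w x) ^ a * w x ^ s ∂μ
        ≤ ∫⁻ x in {x | t ≤ w x}, t ^ a * w x ^ s ∂μ := by
          gcongr
          exact min_le_left _ _
      _ = t ^ a * ∫⁻ x in {x | t ≤ w x}, w x ^ s ∂μ := lintegral_const_mul _ (hwm.pow_const s)
      _ ≤ t ^ a * (dyadicConst s * weakL1Norm μ w * t ^ (s - 1)) := by
          gcongr
          exact setLIntegral_rpow_superlevel_le hwm hw hs₀ hs₁ ht₀ ht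
      _ = dyadicConst s * weakL1Norm μ w * t ^ (a + s - 1) := by
          rw [add_sub_assoc, ENNReal.rpow_add _ _ ht₀ ht]
          ring
  have huniv : {x | w x ≤ t} ∪ {x | t ≤ w x} = Set.univ :=
    Set.eq_univ_of_forall fun x => le_total (w x) t
  rw [← setLIntegral_univ, ← huniv, add_mul, add_mul]
  exact (lintegral_union_le _ _ _).trans (add_le_add hsmall hlarge)

end WeakL1

section Kernel

variable {X Y : Type*} [MeasurableSpace X] [MeasurableSpace Y] {μ : Measure X} {ν : Measure Y}
  {α s : ℝ}

lemma setLIntegral_rpow_mul_rpow_sublevel_le {u w : Y → ℝ≥0∞} (hu : Measurable u)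
    (hwm : Measurable w) (hw : weakL1Norm ν w ≠ ⊤) (hα₀ : 0 ≤ α) (hα₁ : α < 1)
    (hαs : 1 < α + s) {t : ℝ≥0∞} (ht₀ : t ≠ 0) (ht : t ≠ ⊤) :
    ∫⁻ y in {y | w y ≤ t}, u y ^ α * w y ^ s ∂ν ≤
      (∫⁻ y, u y ∂ν) ^ α * (dyadicConst (s / (1 - α)) * weakL1Norm ν w) ^ (1 - α) *
        t ^ (α + s - 1) := by
  have hα : 0 < 1 - α := by linarith
  have hexp : 1 < s / (1 - α) := by rw [one_lt_div hα]; linarith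
  calc ∫⁻ y in {y | w y ≤ t}, u y ^ α * w y ^ s ∂ν
      = ∫⁻ y in {y | w y ≤ t}, u y ^ α * (w y ^ (s / (1 - α))) ^ (1 - α) ∂ν := by
        simp_rw [← ENNReal.rpow_mul, div_mul_cancel₀ s hα.ne']
    _ ≤ (∫⁻ y in {y | w y ≤ t}, u y ∂ν) ^ α *
          (∫⁻ y in {y | w y ≤ t}, w y ^ (s / (1 - α)) ∂ν) ^ (1 - α) :=
        ENNReal.lintegral_mul_norm_pow_le hu.aemeasurable (hwm.pow_const _).aemeasurable hα₀ hα.le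
          (by ring)
    _ ≤ (∫⁻ y, u y ∂ν) ^ α * (dyadicConst (s / (1 - α)) * weakL1Norm ν w *
          t ^ (s / (1 - α) - 1)) ^ (1 - α) := by
        gcongr
        · exact Measure.restrict_le_self
        · exact setLIntegral_rpow_sublevel_le hwm hw hexp ht₀ ht
    _ = (∫⁻ y, u y ∂ν) ^ α * (dyadicConst (s / (1 - α)) * weakL1Norm ν w) ^ (1 - α) *
          t ^ (α + s - 1) := by
        rw [ENNReal.mul_rpow_of_nonneg _ _ hα.le, ← ENNReal.rpow_mul, sub_mul,
          div_mul_cancel₀ s hα.ne', show s - 1 * (1 - α) = α + s - 1 by ring, mul_assoc]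

lemma setLIntegral_rpow_mul_rpow_superlevel_le {u w : Y → ℝ≥0∞} (hu : Measurable u)
    (hwm : Measurable w) (hw : weakL1Norm ν w ≠ ⊤) (hα : 0 ≤ α) (hs₀ : 0 < s) (hs₁ : s < 1)
    {t : ℝ≥0∞} (ht₀ : t ≠ 0) (ht : t ≠ ⊤) :
    ∫⁻ y in {y | u y ≤ t ∧ t ≤ w y}, u y ^ α * w y ^ s ∂ν ≤
      dyadicConst s * weakL1Norm ν w * t ^ (α + s - 1) := by
  have hmeas : MeasurableSet {y | u y ≤ t ∧ t ≤ w y} :=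
    (measurableSet_le hu measurable_const).inter (measurableSet_le measurable_const hwm)
  calc ∫⁻ y in {y | u y ≤ t ∧ t ≤ w y}, u y ^ α * w y ^ s ∂ν
      ≤ ∫⁻ y in {y | u y ≤ t ∧ t ≤ w y}, t ^ α * w y ^ s ∂ν :=
        setLIntegral_mono' hmeas fun y hy => by gcongr; exact hy.1
    _ ≤ ∫⁻ y in {y | t ≤ w y}, t ^ α * w y ^ s ∂ν := lintegral_mono_set fun y hy => hy.2
    _ = t ^ α * ∫⁻ y in {y | t ≤ w y}, w y ^ s ∂ν := lintegral_const_mul _ (hwm.pow_const s)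
    _ ≤ t ^ α * (dyadicConst s * weakL1Norm ν w * t ^ (s - 1)) := by
        gcongr
        exact setLIntegral_rpow_superlevel_le hwm hw hs₀ hs₁ ht₀ ht
    _ = dyadicConst s * weakL1Norm ν w * t ^ (α + s - 1) := by
        rw [add_sub_assoc, ENNReal.rpow_add _ _ ht₀ ht]
        ring

lemma setLIntegral_rpow_mul_rpow_lt_min_le {u w : Y → ℝ≥0∞} (hu : Measurable u)
    (hw : Measurable w) (hαs : α + s < 2) {t : ℝ≥0∞} (ht₀ : t ≠ 0) (ht : t ≠ ⊤) :
    ∫⁻ y in {y | t < min (u y) (w y)}, u y ^ α * w y ^ s ∂ν ≤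
      t ^ (α + s - 2) * ∫⁻ y, min (u y) (w y) ^ (2 - α - s) * (u y ^ α * w y ^ s) ∂ν := by
  have hmeas : MeasurableSet {y | t < min (u y) (w y)} :=
    measurableSet_lt measurable_const (hu.min hw)
  have hcancel : t ^ (α + s - 2) * t ^ (2 - α - s) = 1 := by
    rw [← ENNReal.rpow_add _ _ ht₀ ht, show α + s - 2 + (2 - α - s) = 0 by ring,
      ENNReal.rpow_zero]
  calc ∫⁻ y in {y | t < min (u y) (w y)}, u y ^ α * w y ^ s ∂ν
      ≤ ∫⁻ y in {y | t < min (u y) (w y)},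
          t ^ (α + s - 2) * (min (u y) (w y) ^ (2 - α - s) * (u y ^ α * w y ^ s)) ∂ν := by
        refine setLIntegral_mono' hmeas fun y hy => ?_
        calc u y ^ α * w y ^ s
            = t ^ (α + s - 2) * (t ^ (2 - α - s) * (u y ^ α * w y ^ s)) := by
              rw [← mul_assoc, hcancel, one_mul]
          _ ≤ _ := by
              gcongr
              · linarith
              · exact hy.le
    _ ≤ ∫⁻ y, t ^ (α + s - 2) * (min (u y) (w y) ^ (2 - α - s) * (u y ^ α * w y ^ s)) ∂ν :=
        setLIntegral_le_lintegral _ _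
    _ = t ^ (α + s - 2) * ∫⁻ y, min (u y) (w y) ^ (2 - α - s) * (u y ^ α * w y ^ s) ∂ν :=
        lintegral_const_mul' _ _ (by finiteness)

/-- Constant of the pointwise estimate for the operator of kernel `w ^ s`, with `B` a bound for the
weak `L¹` norm of `w`. Its summands come from the regions `w ≤ t`, `u ≤ t ≤ w` and
`t < min u w`. -/
noncomputable def kernelConst (α s : ℝ) (B : ℝ≥0∞) : ℝ≥0∞ :=
  (dyadicConst (s / (1 - α)) * B) ^ (1 - α) + dyadicConst s * B + 1

lemma kernelConst_ne_top (hα₁ : α < 1) (hs₁ : s < 1) (hαs : 1 < α + s) {B : ℝ≥0∞}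
    (hB : B ≠ ⊤) : kernelConst α s B ≠ ⊤ := by
  have hcrit : s / (1 - α) ≠ 1 := by
    rw [ne_eq, div_eq_one_iff_eq (by linarith)]
    linarith
  have hC := dyadicConst_ne_top hcrit
  have hC' := dyadicConst_ne_top hs₁.ne
  rw [kernelConst]
  finiteness [sub_nonneg.2 hα₁.le]

lemma lintegral_rpow_mul_rpow_le_level {u w : Y → ℝ≥0∞} (hu : Measurable u) (hwm : Measurable w)
    (hw : weakL1Norm ν w ≠ ⊤) (hα₁ : α < 1) (hs₁ : s < 1) (hαs : 1 < α + s)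
    (hu₁ : ∫⁻ y, u y ∂ν ≤ 1) {t : ℝ≥0∞} (ht₀ : t ≠ 0) (ht : t ≠ ⊤) :
    ∫⁻ y, u y ^ α * w y ^ s ∂ν ≤
      ((dyadicConst (s / (1 - α)) * weakL1Norm ν w) ^ (1 - α) + dyadicConst s * weakL1Norm ν w) *
          t ^ (α + s - 1) +
        t ^ (α + s - 2) * ∫⁻ y, min (u y) (w y) ^ (2 - α - s) * (u y ^ α * w y ^ s) ∂ν := by
  have hα₀ : 0 ≤ α := by linarith
  have hs₀ : 0 < s := by linarith
  have hcover : Set.univ ⊆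
      {y | w y ≤ t} ∪ {y | u y ≤ t ∧ t ≤ w y} ∪ {y | t < min (u y) (w y)} := by
    intro y _
    rcases le_or_gt (w y) t with hwt | hwt
    · exact .inl (.inl hwt)
    · rcases le_or_gt (u y) t with hut | hut
      · exact .inl (.inr ⟨hut, hwt.le⟩)
      · exact .inr (lt_min hut hwt)
  have hw_le := setLIntegral_rpow_mul_rpow_sublevel_le hu hwm hw hα₀ hα₁ hαs ht₀ ht
  have hu_le := setLIntegral_rpow_mul_rpow_superlevel_le hu hwm hw hα₀ hs₀ hs₁ ht₀ ht
  have hmin := setLIntegral_rpow_mul_rpow_lt_min_le (ν := ν) hu hwm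
    (by linarith : α + s < 2) ht₀ ht
  calc ∫⁻ y, u y ^ α * w y ^ s ∂ν
      ≤ (∫⁻ y in {y | w y ≤ t}, u y ^ α * w y ^ s ∂ν +
          ∫⁻ y in {y | u y ≤ t ∧ t ≤ w y}, u y ^ α * w y ^ s ∂ν) +
          ∫⁻ y in {y | t < min (u y) (w y)}, u y ^ α * w y ^ s ∂ν := by
        rw [← setLIntegral_univ]
        refine (lintegral_mono_set hcover).trans ((lintegral_union_le _ _ _).trans ?_)
        gcongr
        exact lintegral_union_le _ _ _
    _ ≤ _ := by
        rw [add_mul]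
        gcongr
        refine hw_le.trans ?_
        gcongr
        exact mul_le_of_le_one_left' (ENNReal.rpow_le_one hu₁ hα₀)

lemma lintegral_rpow_mul_rpow_le_rpow_lintegral_min {u w : Y → ℝ≥0∞} (hu : Measurable u)
    (hwm : Measurable w) (hw : weakL1Norm ν w ≠ ⊤) (hα₁ : α < 1) (hs₁ : s < 1)
    (hαs : 1 < α + s) (hu₁ : ∫⁻ y, u y ∂ν ≤ 1) :
    ∫⁻ y, u y ^ α * w y ^ s ∂ν ≤ kernelConst α s (weakL1Norm ν w) *
      (∫⁻ y, min (u y) (w y) ^ (2 - α - s) * (u y ^ α * w y ^ s) ∂ν) ^ (α + s - 1) := by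
  have hα₀ : 0 < α := by linarith
  have hs₀ : 0 < s := by linarith
  set J := ∫⁻ y, min (u y) (w y) ^ (2 - α - s) * (u y ^ α * w y ^ s) ∂ν with hJ_def
  by_cases hJ : J = ⊤
  · have hC : kernelConst α s (weakL1Norm ν w) ≠ 0 := by simp [kernelConst]
    simp [hJ, ENNReal.top_rpow_of_pos (sub_pos.2 hαs), ENNReal.mul_top hC]
  by_cases hJ₀ : J = 0
  · have hae : ∀ᵐ y ∂ν, u y ^ α * w y ^ s = 0 := by
      have hvanish := (lintegral_eq_zero_iff (((hu.min hwm).pow_const _).mul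
        ((hu.pow_const _).mul (hwm.pow_const _)))).1 hJ₀
      filter_upwards [hvanish] with y hy
      rcases mul_eq_zero.1 hy with hmin | hprod
      · rcases min_eq_bot.1 ((ENNReal.rpow_eq_zero_iff_of_pos (by linarith)).1 hmin) with h | h
        · simp [h, hα₀]
        · simp [h, hs₀]
      · exact hprod
    simp [lintegral_congr_ae hae]
  -- The level `t = J` balances the two terms of the estimate.
  refine (lintegral_rpow_mul_rpow_le_level hu hwm hw hα₁ hs₁ hαs hu₁ hJ₀ hJ).trans_eq ?_
  have hbalance : J ^ (α + s - 2) * J = J ^ (α + s - 1) := by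
    nth_rw 2 [← ENNReal.rpow_one J]
    rw [← ENNReal.rpow_add _ _ hJ₀ hJ]
    ring_nf
  rw [← hJ_def, hbalance, kernelConst, add_mul _ 1, one_mul]

lemma lintegral_lintegral_min_rpow_mul_le [SFinite μ] [SFinite ν] {u : Y → ℝ≥0∞}
    {W : X → Y → ℝ≥0∞} (hu : Measurable u) (hW : Measurable (Function.uncurry W)) {B : ℝ≥0∞}
    (hB : B ≠ ⊤) (hWμ : ∀ y, weakL1Norm μ (fun x => W x y) ≤ B) (hα₀ : 0 < α) (hα₁ : α < 1)
    (hs₀ : 0 < s) (hs₁ : s < 1) (hu_top : ∫⁻ y, u y ∂ν ≠ ⊤) :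
    ∫⁻ x, ∫⁻ y, min (u y) (W x y) ^ (2 - α - s) * (u y ^ α * W x y ^ s) ∂ν ∂μ ≤
      (dyadicConst (2 - α) + dyadicConst s) * B * ∫⁻ y, u y ∂ν := by
  have hu₂ : Measurable fun p : X × Y => u p.2 := hu.comp measurable_snd
  have hmeas : Measurable (Function.uncurry fun x y =>
      min (u y) (W x y) ^ (2 - α - s) * (u y ^ α * W x y ^ s)) :=
    ((hu₂.min hW).pow_const _).mul ((hu₂.pow_const _).mul (hW.pow_const _))
  have hWy : ∀ y, Measurable fun x => W x y := fun y => hW.comp measurable_prodMk_right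
  rw [lintegral_lintegral_swap hmeas.aemeasurable, ← lintegral_const_mul _ hu]
  refine lintegral_mono_ae ?_
  filter_upwards [ae_lt_top hu hu_top] with y hy
  by_cases hy₀ : u y = 0
  · simp [hy₀, hα₀]
  calc ∫⁻ x, min (u y) (W x y) ^ (2 - α - s) * (u y ^ α * W x y ^ s) ∂μ
      = u y ^ α * ∫⁻ x, min (u y) (W x y) ^ (2 - α - s) * W x y ^ s ∂μ := by
        rw [← lintegral_const_mul' _ _ (by finiteness)]
        exact lintegral_congr fun x => by ring
    _ ≤ u y ^ α * ((dyadicConst (2 - α - s + s) + dyadicConst s) *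
          weakL1Norm μ (fun x => W x y) * u y ^ (2 - α - s + s - 1)) := by
        gcongr
        exact lintegral_min_rpow_mul_rpow_le (hWy y) (ne_top_of_le_ne_top hB (hWμ y)) hs₀ hs₁
          (by linarith) hy₀ hy.ne
    _ ≤ u y ^ α * ((dyadicConst (2 - α) + dyadicConst s) * B * u y ^ (1 - α)) := by
        rw [sub_add_cancel, show 2 - α - 1 = 1 - α by ring]
        gcongr
        exact hWμ y
    _ = (dyadicConst (2 - α) + dyadicConst s) * B * u y := by
        have hsplit : u y ^ α * u y ^ (1 - α) = u y := by
          rw [← ENNReal.rpow_add _ _ hy₀ hy.ne, add_sub_cancel, ENNReal.rpow_one]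
        rw [mul_left_comm, hsplit]

theorem lintegral_rpow_lintegral_rpow_mul_rpow_le [SFinite μ] [SFinite ν] {u : Y → ℝ≥0∞}
    {W : X → Y → ℝ≥0∞} (hu : Measurable u) (hW : Measurable (Function.uncurry W)) {B : ℝ≥0∞}
    (hB : B ≠ ⊤) (hWμ : ∀ y, weakL1Norm μ (fun x => W x y) ≤ B)
    (hWν : ∀ x, weakL1Norm ν (W x) ≤ B) (hα₁ : α < 1) (hs₁ : s < 1) (hαs : 1 < α + s)
    (hu₁ : ∫⁻ y, u y ∂ν ≤ 1) :
    ∫⁻ x, (∫⁻ y, u y ^ α * W x y ^ s ∂ν) ^ (1 / (α + s - 1)) ∂μ ≤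
      kernelConst α s B ^ (1 / (α + s - 1)) * ((dyadicConst (2 - α) + dyadicConst s) * B) := by
  have hα₀ : 0 < α := by linarith
  have hs₀ : 0 < s := by linarith
  have hδ : 0 < α + s - 1 := by linarith
  have hC : kernelConst α s B ≠ ⊤ := kernelConst_ne_top hα₁ hs₁ hαs hB
  let J : X → ℝ≥0∞ := fun x => ∫⁻ y, min (u y) (W x y) ^ (2 - α - s) * (u y ^ α * W x y ^ s) ∂ν
  have hWx : ∀ x, Measurable (W x) := fun x => hW.comp measurable_prodMk_left
  have hpointwise : ∀ x, ∫⁻ y, u y ^ α * W x y ^ s ∂ν ≤ kernelConst α s B * J x ^ (α + s - 1) := by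
    intro x
    refine (lintegral_rpow_mul_rpow_le_rpow_lintegral_min hu (hWx x)
      (ne_top_of_le_ne_top hB (hWν x)) hα₁ hs₁ hαs hu₁).trans ?_
    unfold kernelConst
    gcongr
    exacts [hWν x, hWν x]
  calc ∫⁻ x, (∫⁻ y, u y ^ α * W x y ^ s ∂ν) ^ (1 / (α + s - 1)) ∂μ
      ≤ ∫⁻ x, (kernelConst α s B * J x ^ (α + s - 1)) ^ (1 / (α + s - 1)) ∂μ := by
        gcongr with x
        exact hpointwise x
    _ = kernelConst α s B ^ (1 / (α + s - 1)) * ∫⁻ x, J x ∂μ := by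
        rw [← lintegral_const_mul' _ _ (by finiteness)]
        refine lintegral_congr fun x => ?_
        rw [ENNReal.mul_rpow_of_nonneg _ _ (by positivity), ← ENNReal.rpow_mul,
          mul_one_div_cancel hδ.ne', ENNReal.rpow_one]
    _ ≤ kernelConst α s B ^ (1 / (α + s - 1)) * ((dyadicConst (2 - α) + dyadicConst s) * B) := by
        gcongr
        refine (lintegral_lintegral_min_rpow_mul_le hu hW hB hWμ hα₀ hα₁ hs₀ hs₁
          (ne_top_of_le_ne_top one_ne_top hu₁)).trans ?_
        exact mul_le_of_le_one_right' hu₁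

end Kernel

section LpNorm

variable {X Y : Type*} [MeasurableSpace X] [MeasurableSpace Y] {μ : Measure X} {ν : Measure Y}
  {p s : ℝ}

lemma lpNorm_const_mul (hp : 0 < p) {c : ℝ≥0∞} (hc : c ≠ ⊤) (h : X → ℝ≥0∞) :
    lpNorm μ p (fun x => c * h x) = c * lpNorm μ p h := by
  simp_rw [_root_.lpNorm, ENNReal.mul_rpow_of_nonneg _ _ hp.le]
  rw [lintegral_const_mul' _ _ (by finiteness), ENNReal.mul_rpow_of_nonneg _ _ (by positivity),
    ← ENNReal.rpow_mul, mul_one_div_cancel hp.ne', ENNReal.rpow_one]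

lemma lpNorm_eq_zero_iff (hp : 0 < p) {h : X → ℝ≥0∞} (hh : Measurable h) :
    lpNorm μ p h = 0 ↔ ∀ᵐ x ∂μ, h x = 0 := by
  rw [_root_.lpNorm, ENNReal.rpow_eq_zero_iff_of_pos (by positivity),
    lintegral_eq_zero_iff (hh.pow_const p)]
  simp [Filter.EventuallyEq, ENNReal.rpow_eq_zero_iff_of_pos hp]

lemma exists_lpNorm_lintegral_kernel_le_of_lpNorm_le_one [SFinite μ] [SFinite ν]
    {W : X → Y → ℝ≥0∞} (hW : Measurable (Function.uncurry W)) {B : ℝ≥0∞} (hB : B ≠ ⊤)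
    (hWμ : ∀ y, weakL1Norm μ (fun x => W x y) ≤ B) (hWν : ∀ x, weakL1Norm ν (W x) ≤ B)
    (hs : s < 1) (hps : 1 - s < 1 / p) (hp : 1 / p < 1) :
    ∃ K : ℝ≥0∞, K ≠ ⊤ ∧ ∀ g : Y → ℝ≥0∞, Measurable g → lpNorm ν p g ≤ 1 →
      lpNorm μ (1 / (1 / p + s - 1)) (fun x => ∫⁻ y, g y * W x y ^ s ∂ν) ≤ K := by
  have hp₀ : 0 < p := one_div_pos.1 (by linarith)
  have hδ : 0 < 1 / p + s - 1 := by linarith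
  have hkernel := kernelConst_ne_top hp hs (by linarith) hB
  have hdyadic := dyadicConst_ne_top (s := 2 - 1 / p) (by linarith)
  have hdyadic' := dyadicConst_ne_top hs.ne
  refine ⟨(kernelConst (1 / p) s B ^ (1 / (1 / p + s - 1)) *
    ((dyadicConst (2 - 1 / p) + dyadicConst s) * B)) ^ (1 / (1 / (1 / p + s - 1))),
    by finiteness [one_div_pos.2 hδ], fun g hg hg₁ => ENNReal.rpow_le_rpow ?_ (by positivity)⟩
  have hint : ∫⁻ y, g y ^ p ∂ν ≤ 1 :=
    not_lt.1 fun h => hg₁.not_gt (ENNReal.one_lt_rpow h (one_div_pos.2 hp₀))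
  simpa only [← ENNReal.rpow_mul, mul_one_div_cancel hp₀.ne', ENNReal.rpow_one] using
    lintegral_rpow_lintegral_rpow_mul_rpow_le (hg.pow_const p) hW hB hWμ hWν hp hs
      (by linarith) hint

theorem exists_lpNorm_lintegral_kernel_le [SFinite μ] [SFinite ν]
    {W : X → Y → ℝ≥0∞} (hW : Measurable (Function.uncurry W)) {B : ℝ≥0∞} (hB : B ≠ ⊤)
    (hWμ : ∀ y, weakL1Norm μ (fun x => W x y) ≤ B) (hWν : ∀ x, weakL1Norm ν (W x) ≤ B)
    (hs : s < 1) (hps : 1 - s < 1 / p) (hp : 1 / p < 1) :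
    ∃ K : NNReal, ∀ f : Y → ℝ≥0∞, Measurable f →
      lpNorm μ (1 / (1 / p + s - 1)) (fun x => ∫⁻ y, f y * W x y ^ s ∂ν) ≤ K * lpNorm ν p f := by
  have hp₀ : 0 < p := one_div_pos.1 (by linarith)
  have hδ : 0 < 1 / p + s - 1 := by linarith
  obtain ⟨K, hK, hunit⟩ :=
    exists_lpNorm_lintegral_kernel_le_of_lpNorm_le_one hW hB hWμ hWν hs hps hp
  lift K to NNReal using hK
  refine ⟨K + 1, fun f hf => ?_⟩
  by_cases hf_top : lpNorm ν p f = ⊤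
  · simp [hf_top, ENNReal.mul_top]
  by_cases hf₀ : lpNorm ν p f = 0
  · have hker : ∀ x, ∫⁻ y, f y * W x y ^ s ∂ν = 0 := fun x => by
      have hae : ∀ᵐ y ∂ν, f y * W x y ^ s = 0 := by
        filter_upwards [(lpNorm_eq_zero_iff hp₀ hf).1 hf₀] with y hy
        simp [hy]
      simp [lintegral_congr_ae hae]
    have hzero := (lpNorm_eq_zero_iff (μ := μ) (one_div_pos.2 hδ) measurable_const).2
      (ae_of_all μ fun _ => rfl)
    simp_rw [hker]
    exact hzero.trans_le zero_le
  set N := lpNorm ν p f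
  have hN : lpNorm ν p (fun y => N⁻¹ * f y) = 1 := by
    rw [lpNorm_const_mul hp₀ (ENNReal.inv_ne_top.2 hf₀), ENNReal.inv_mul_cancel hf₀ hf_top]
  have hscale : ∀ x, ∫⁻ y, f y * W x y ^ s ∂ν = N * ∫⁻ y, N⁻¹ * f y * W x y ^ s ∂ν := fun x => by
    rw [← lintegral_const_mul' _ _ hf_top]
    refine lintegral_congr fun y => ?_
    rw [mul_assoc N⁻¹, ENNReal.mul_inv_cancel_left hf₀ hf_top]
  simp_rw [hscale]
  rw [lpNorm_const_mul (one_div_pos.2 hδ) hf_top, mul_comm]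
  gcongr
  exact (hunit _ (hf.const_mul _) hN.le).trans (by simp)

end LpNorm

section FractionalIntegral

variable {X : Type*} [MeasurableSpace X] {d : X → X → ℝ} {μ : Measure X} {η β A p : ℝ}

/-- Upper half of Ahlfors regularity: the `d`-balls of radius `r` have measure at most `A r ^ η`. -/
def HasUpperGrowth (d : X → X → ℝ) (μ : Measure X) (η A : ℝ) : Prop :=
  ∀ x : X, ∀ r : ℝ, 0 < r → μ {y | d x y < r} ≤ ENNReal.ofReal (A * r ^ η)

lemma HasUpperGrowth.sigmaFinite (hμ : HasUpperGrowth d μ η A) : SigmaFinite μ := by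
  rcases isEmpty_or_nonempty X with _ | ⟨⟨x₀⟩⟩
  · rw [Measure.eq_zero_of_isEmpty μ]
    infer_instance
  refine ⟨⟨⟨fun n : ℕ => {y | d x₀ y < n + 1}, fun _ => trivial, fun n => ?_, ?_⟩⟩⟩
  · exact (hμ x₀ (n + 1) (by positivity)).trans_lt ENNReal.ofReal_lt_top
  · refine Set.eq_univ_of_forall fun y => Set.mem_iUnion.2 ?_
    obtain ⟨n, hn⟩ := exists_nat_gt (d x₀ y)
    exact ⟨n, hn.trans (lt_add_one _)⟩

lemma HasUpperGrowth.weakL1Norm_rpow_neg_le (hμ : HasUpperGrowth d μ η A) (hη : 0 < η) (x : X) :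
    weakL1Norm μ (fun y => ENNReal.ofReal (d x y) ^ (-η)) ≤ ENNReal.ofReal (A * 2 ^ η) := by
  refine iSup_le fun τ => ?_
  rcases eq_or_ne τ 0 with rfl | hτ₀
  · simp
  have hτ : 0 < (τ : ℝ) := by positivity
  set r : ℝ := (τ : ℝ)⁻¹ ^ η⁻¹
  have hr : 0 < r := by positivity
  have hrη : r ^ η = (τ : ℝ)⁻¹ := Real.rpow_inv_rpow (by positivity) hη.ne'
  have hsub : {y | (τ : ℝ≥0∞) ≤ ENNReal.ofReal (d x y) ^ (-η)} ⊆ {y | d x y < 2 * r} := by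
    intro y hy
    by_contra hy_far
    have hfar : 2 * r ≤ d x y := not_lt.1 hy_far
    have hdist : 0 < d x y := by linarith
    have hdecay : d x y ^ (-η) < r ^ (-η) :=
      Real.rpow_lt_rpow_of_neg hr (by linarith) (neg_neg_of_pos hη)
    rw [Real.rpow_neg hr.le, hrη, inv_inv] at hdecay
    have hτ_le : (τ : ℝ≥0∞) ≤ ENNReal.ofReal (d x y ^ (-η)) := by
      rw [← ENNReal.ofReal_rpow_of_pos hdist]
      exact hy
    rw [← ENNReal.ofReal_coe_nnreal, ENNReal.ofReal_le_ofReal_iff (by positivity)] at hτ_le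
    exact hdecay.not_ge hτ_le
  calc (τ : ℝ≥0∞) * μ {y | (τ : ℝ≥0∞) ≤ ENNReal.ofReal (d x y) ^ (-η)}
      ≤ τ * ENNReal.ofReal (A * (2 * r) ^ η) := by
        gcongr
        exact (measure_mono hsub).trans (hμ x (2 * r) (by positivity))
    _ = ENNReal.ofReal (A * 2 ^ η) := by
        rw [← ENNReal.ofReal_coe_nnreal, ← ENNReal.ofReal_mul hτ.le,
          Real.mul_rpow zero_le_two hr.le, hrη]
        congr 1
        field_simp

lemma measurable_fracInt [SFinite μ] (hd : Measurable fun p : X × X => d p.1 p.2)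
    {f : X → ℝ≥0∞} (hf : Measurable f) : Measurable (fracInt d μ β η f) :=
  Measurable.lintegral_prod_right'
    (f := fun p : X × X => f p.2 * ENNReal.ofReal (d p.1 p.2) ^ (β - η))
    ((hf.comp measurable_snd).mul (hd.ennreal_ofReal.pow_const _))

theorem exists_lpNorm_fracInt_le (hd : Measurable fun p : X × X => d p.1 p.2)
    (hsymm : ∀ x y, d x y = d y x) (hη : 0 < η) (hμ : HasUpperGrowth d μ η A) (hβ : 0 < β)
    (hβp : β / η < 1 / p) (hp : 1 / p < 1) :
    ∃ K : NNReal, ∀ f : X → ℝ≥0∞, Measurable f →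
      lpNorm μ (1 / (1 / p - β / η)) (fracInt d μ β η f) ≤ K * lpNorm μ p f := by
  have := hμ.sigmaFinite
  have hkernel : ∀ x y, (ENNReal.ofReal (d x y) ^ (-η)) ^ (1 - β / η) =
      ENNReal.ofReal (d x y) ^ (β - η) := fun x y => by
    rw [← ENNReal.rpow_mul]
    congr 1
    field_simp
    ring
  have hweak := hμ.weakL1Norm_rpow_neg_le hη
  have hweak' : ∀ y, weakL1Norm μ (fun x => ENNReal.ofReal (d x y) ^ (-η)) ≤
      ENNReal.ofReal (A * 2 ^ η) := fun y => by simpa only [hsymm _ y] using hweak y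
  have hHLS := exists_lpNorm_lintegral_kernel_le (s := 1 - β / η) (p := p)
    (hd.ennreal_ofReal.pow_const (-η)) ENNReal.ofReal_ne_top hweak' hweak
    (sub_lt_self 1 (div_pos hβ hη)) (by simpa using hβp) hp
  simp only [hkernel, add_sub_assoc, sub_sub_cancel_left, ← sub_eq_add_neg] at hHLS
  exact hHLS

end FractionalIntegral

theorem statement1_general {X : Type*} [MeasurableSpace X]
    (d : X → X → ℝ) (hsymm : ∀ x y, d x y = d y x)
    (hd_meas : Measurable fun p : X × X => d p.1 p.2)
    (μ : Measure X) (η : ℝ) (hη : 0 < η) (A : ℝ) (hμ : HasUpperGrowth d μ η A)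
    (γ : ℝ) (hγ2η : γ < 2 * η)
    (σ : ℝ) (hσ : σ = (2 * η - γ) / (2 * η))
    (p₁ p₂ p₃ : ℝ)
    (hp₁l : σ < 1 / p₁) (hp₁u : 1 / p₁ < 1)
    (hp₂l : σ < 1 / p₂) (hp₂u : 1 / p₂ < 1)
    (hp₃ : 1 / p₃ = 1 / p₁ + 1 / p₂ - 2 * σ) :
    ∃ C : ℝ, 0 < C ∧ ∀ f g : X → ℝ≥0∞, Measurable f → Measurable g →
      lpNorm μ p₃
          (fun x => fracInt d μ (η - γ / 2) η f x * fracInt d μ (η - γ / 2) η g x) ≤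
        ENNReal.ofReal C * lpNorm μ p₁ f * lpNorm μ p₂ g := by
  have := hμ.sigmaFinite
  have hσβ : σ = (η - γ / 2) / η := by rw [hσ]; field_simp
  have hβ : 0 < η - γ / 2 := by linarith
  obtain ⟨K₁, hK₁⟩ := exists_lpNorm_fracInt_le hd_meas hsymm hη hμ hβ (hσβ ▸ hp₁l) hp₁u
  obtain ⟨K₂, hK₂⟩ := exists_lpNorm_fracInt_le hd_meas hsymm hη hμ hβ (hσβ ▸ hp₂l) hp₂u
  rw [← hσβ] at hK₁ hK₂
  have hp₃₀ : 0 < p₃ := one_div_pos.1 (by linarith)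
  refine ⟨K₁ * K₂ + 1, by positivity, fun f g hf hg => ?_⟩
  have hHolder := ENNReal.lintegral_Lp_mul_le_Lq_mul_Lr (p := p₃) (q := 1 / (1 / p₁ - σ))
    (r := 1 / (1 / p₂ - σ)) hp₃₀ (by rw [lt_one_div hp₃₀ (by linarith)]; linarith)
    (by rw [one_div_one_div, one_div_one_div, hp₃]; ring) μ
    (measurable_fracInt (μ := μ) (β := η - γ / 2) (η := η) hd_meas hf).aemeasurable
    (measurable_fracInt (μ := μ) (β := η - γ / 2) (η := η) hd_meas hg).aemeasurable
  calc lpNorm μ p₃ (fun x => fracInt d μ (η - γ / 2) η f x * fracInt d μ (η - γ / 2) η g x)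
      ≤ (K₁ * lpNorm μ p₁ f) * (K₂ * lpNorm μ p₂ g) :=
        hHolder.trans (mul_le_mul' (hK₁ f hf) (hK₂ g hg))
    _ = (K₁ * K₂ : NNReal) * lpNorm μ p₁ f * lpNorm μ p₂ g := by push_cast; ring
    _ ≤ ENNReal.ofReal (K₁ * K₂ + 1) * lpNorm μ p₁ f * lpNorm μ p₂ g := by
        gcongr
        rw [← ENNReal.ofReal_coe_nnreal, NNReal.coe_mul]
        exact ENNReal.ofReal_le_ofReal (by linarith)

/-- Case `A_σ`: `‖(I_{η-γ/2}f)(I_{η-γ/2}g)‖_{p₃} ≤ C ‖f‖_{p₁} ‖g‖_{p₂}` when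
`σ < 1/p₁ < 1`, `σ < 1/p₂ < 1` and `1/p₃ = 1/p₁ + 1/p₂ - 2σ`, `σ = (2η-γ)/(2η)`. -/
theorem statement1 {X : Type*} [MeasurableSpace X]
    (d : X → X → ℝ) (κ : ℝ) (hκ : 1 ≤ κ) (hqm : IsQuasiMetric d κ)
    (hd_meas : Measurable fun p : X × X => d p.1 p.2)
    (μ : Measure X) (η : ℝ) (hη : 0 < η)
    (a A : ℝ) (ha : 0 < a) (haA : a ≤ A) (hAhl : IsAhlfors d μ η a A)
    (γ : ℝ) (hγ0 : 0 < γ) (hγ2η : γ < 2 * η)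
    (σ : ℝ) (hσ : σ = (2 * η - γ) / (2 * η))
    (p₁ p₂ p₃ : ℝ)
    (hp₁l : σ < 1 / p₁) (hp₁u : 1 / p₁ < 1)
    (hp₂l : σ < 1 / p₂) (hp₂u : 1 / p₂ < 1)
    (hp₃ : 1 / p₃ = 1 / p₁ + 1 / p₂ - 2 * σ) :
    ∃ C : ℝ, 0 < C ∧ ∀ f g : X → ℝ≥0∞, Measurable f → Measurable g →
      lpNorm μ p₁ f ≠ ⊤ → lpNorm μ p₂ g ≠ ⊤ →
      lpNorm μ p₃
          (fun x => fracInt d μ (η - γ / 2) η f x * fracInt d μ (η - γ / 2) η g x) ≤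
        ENNReal.ofReal C * lpNorm μ p₁ f * lpNorm μ p₂ g := by
  obtain ⟨C, hC, h⟩ := statement1_general d hqm.2.2.1 hd_meas μ η hη A
    (fun x r hr => (hAhl x r hr).2) γ hγ2η σ hσ p₁ p₂ p₃ hp₁l hp₁u hp₂l hp₂u hp₃
  exact ⟨C, hC, fun f g hf hg _ _ => h f g hf hg⟩
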